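/- Let λ_1(G_1) ≥ … ≥ λ_d(G_1) be the eigenvalues of G_1 := (A # B)^2 in decreasing order with multiplicities. Then the log-majorizations (a_i b_{d+1-i})_{i=1}^d ≺_(log) (λ_i(G_1))_{i=1}^d ≺_(log) (a_i b_i)_{i=1}^d hold. -/

import Mathlib

open Matrix Filter Topology Finset
open scoped ComplexOrder

/-- Functional-calculus power of a (Hermitian, in practice positive semidefinite)
matrix, with the convention `0 ^ r = 0` for `r > 0`. -/
noncomputable def psdPow {d : ℕ} (A : Matrix (Fin d) (Fin d) ℂ) (r : ℝ) :
    Matrix (Fin d) (Fin d) ℂ :=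
  if hA : A.IsHermitian then
    (hA.eigenvectorUnitary : Matrix (Fin d) (Fin d) ℂ) *
      Matrix.diagonal (fun i => ((hA.eigenvalues i ^ r : ℝ) : ℂ)) *
      star (hA.eigenvectorUnitary : Matrix (Fin d) (Fin d) ℂ)
  else 0

/-- The eigenvalues of a Hermitian matrix, sorted in decreasing order
(with multiplicities). -/
noncomputable def eigsDesc {d : ℕ} (A : Matrix (Fin d) (Fin d) ℂ) : Fin d → ℝ :=
  if hA : A.IsHermitian then
    fun i => hA.eigenvalues (Tuple.sort hA.eigenvalues i.rev)
  else 0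

/-- The geometric mean `X # Y = X^{1/2} (X^{-1/2} Y X^{-1/2})^{1/2} X^{1/2}`,
as used for positive definite `X` (negative functional-calculus powers are taken in the
generalized-inverse sense). -/
noncomputable def geoMeanPD {d : ℕ} (X Y : Matrix (Fin d) (Fin d) ℂ) :
    Matrix (Fin d) (Fin d) ℂ :=
  psdPow X (1 / 2) *
    psdPow (psdPow X (-(1 / 2)) * Y * psdPow X (-(1 / 2))) (1 / 2) *
    psdPow X (1 / 2)

/-- The geometric mean of two positive semidefinite matrices:
`X # Y := lim_{ε↓0} (X + εI) # (Y + εI)`. -/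
noncomputable def geoMean {d : ℕ} (X Y : Matrix (Fin d) (Fin d) ℂ) :
    Matrix (Fin d) (Fin d) ℂ :=
  limUnder (nhdsWithin (0 : ℝ) (Set.Ioi 0))
    (fun ε : ℝ => geoMeanPD (X + (ε : ℂ) • 1) (Y + (ε : ℂ) • 1))

/-- `Gmat A B p = (A^p # B^p)^{2/p}`. -/
noncomputable def Gmat {d : ℕ} (A B : Matrix (Fin d) (Fin d) ℂ) (p : ℝ) :
    Matrix (Fin d) (Fin d) ℂ :=
  psdPow (geoMean (psdPow A p) (psdPow B p)) (2 / p)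

/-- The decreasing rearrangement of a tuple of reals. -/
noncomputable def sortDesc {d : ℕ} (x : Fin d → ℝ) : Fin d → ℝ :=
  fun i => x (Tuple.sort x i.rev)

/-- Log-majorization `x ≺_(log) y` of tuples of nonnegative reals: each partial product
of the `k` largest entries of `x` is at most the corresponding one for `y`, with equality
for the full products. -/
def IsLogMaj {d : ℕ} (x y : Fin d → ℝ) : Prop :=
  (∀ k : Fin d, ∏ i ∈ Finset.Iic k, sortDesc x i ≤ ∏ i ∈ Finset.Iic k, sortDesc y i) ∧
    ∏ i, x i = ∏ i, y i

/-!
For positive definite `A` and `B` the matrix `z = (A^{-1/2} B A^{-1/2})^{1/2} A^{1/2}` satisfies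
`zᴴ z = B` and `A # B = A^{1/2} z`, so `(A # B)² = A^{1/2} (z zᴴ) A^{1/2}`, where `z zᴴ` has the
eigenvalues of `B`. Both log-majorizations are therefore the multiplicative Lidskii inequalities for
the eigenvalues of `X P Xᴴ` in terms of those of `X Xᴴ` and `P`, and these follow from Weyl
monotonicity by the argument of Li and Mathias.

In the semidefinite case one lets `ε ↓ 0`. The limit defining `A # B` exists because
`(A + ε) # (B + ε)` decreases with `ε`, and eigenvalues are continuous because, again by Weyl
monotonicity, they are 1-Lipschitz for the operator norm.
-/

section Sorting

variable {d : ℕ}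

lemma antitone_sortDesc (x : Fin d → ℝ) : Antitone (sortDesc x) :=
  fun _ _ h => Tuple.monotone_sort x (Fin.rev_le_rev.2 h)

lemma sortDesc_eq_comp_perm (x : Fin d → ℝ) :
    sortDesc x = x ∘ (Fin.revPerm.trans (Tuple.sort x)) := rfl

lemma map_sortDesc_univ_val (x : Fin d → ℝ) :
    univ.val.map (sortDesc x) = univ.val.map x := by
  rw [sortDesc_eq_comp_perm, ← Multiset.map_map, Multiset.map_univ_val_equiv]

lemma eq_of_antitone_of_map_univ_val_eq {x y : Fin d → ℝ} (hx : Antitone x) (hy : Antitone y)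
    (h : univ.val.map x = univ.val.map y) : x = y := by
  rw [Fin.univ_val_map, Fin.univ_val_map, Multiset.coe_eq_coe] at h
  exact List.ofFn_injective
    (h.eq_of_sortedGE (List.sortedGE_ofFn_iff.2 hx) (List.sortedGE_ofFn_iff.2 hy))

lemma sortDesc_eq_of_antitone {x y : Fin d → ℝ} (hy : Antitone y)
    (h : univ.val.map x = univ.val.map y) : sortDesc x = y :=
  eq_of_antitone_of_map_univ_val_eq (antitone_sortDesc x) hy ((map_sortDesc_univ_val x).trans h)

lemma sortDesc_of_antitone {x : Fin d → ℝ} (hx : Antitone x) : sortDesc x = x :=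
  sortDesc_eq_of_antitone hx rfl

lemma sortDesc_of_monotone {x : Fin d → ℝ} (hx : Monotone x) : sortDesc x = x ∘ Fin.rev := by
  refine sortDesc_eq_of_antitone (fun _ _ h => hx (Fin.rev_le_rev.2 h)) ?_
  change _ = univ.val.map (x ∘ (Fin.revPerm : Equiv.Perm (Fin d)))
  rw [← Multiset.map_map, Multiset.map_univ_val_equiv]

lemma prod_sortDesc (x : Fin d → ℝ) : ∏ i, sortDesc x i = ∏ i, x i :=
  Equiv.prod_comp (Fin.revPerm.trans (Tuple.sort x)) x

lemma IsLogMaj.of_forall_card_eq {x y : Fin d → ℝ} (hy : Antitone y)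
    (h : ∀ (k : Fin d) (s : Finset (Fin d)), #s = #(Iic k) → ∏ i ∈ s, x i ≤ ∏ i ∈ Iic k, y i)
    (hxy : ∏ i, x i = ∏ i, y i) : IsLogMaj x y := by
  refine ⟨fun k => ?_, hxy⟩
  rw [sortDesc_of_antitone hy]
  simpa [sortDesc_eq_comp_perm] using
    h k ((Iic k).map (Fin.revPerm.trans (Tuple.sort x)).toEmbedding) (card_map _)

end Sorting

section Eigenvalues

variable {d : ℕ} {A B : Matrix (Fin d) (Fin d) ℂ}

lemma eigsDesc_eq_sortDesc_eigenvalues (hA : A.IsHermitian) :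
    eigsDesc A = sortDesc hA.eigenvalues :=
  dif_pos hA

lemma antitone_eigsDesc (A : Matrix (Fin d) (Fin d) ℂ) : Antitone (eigsDesc A) := by
  by_cases hA : A.IsHermitian
  · exact eigsDesc_eq_sortDesc_eigenvalues hA ▸ antitone_sortDesc _
  · rw [eigsDesc, dif_neg hA]
    exact antitone_const

lemma map_eigsDesc_univ_val (hA : A.IsHermitian) :
    univ.val.map (fun i => (eigsDesc A i : ℂ)) = A.charpoly.roots := by
  rw [hA.roots_charpoly_eq_eigenvalues, ← Function.comp_def, ← Multiset.map_map,
    ← Multiset.map_map, eigsDesc_eq_sortDesc_eigenvalues hA, map_sortDesc_univ_val]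
  rfl

lemma eigsDesc_congr (hA : A.IsHermitian) (hB : B.IsHermitian) (h : A.charpoly = B.charpoly) :
    eigsDesc A = eigsDesc B := by
  refine eq_of_antitone_of_map_univ_val_eq (antitone_eigsDesc A) (antitone_eigsDesc B)
    (Multiset.map_injective Complex.ofReal_injective ?_)
  rw [Multiset.map_map, Multiset.map_map]
  exact (map_eigsDesc_univ_val hA).trans (h ▸ (map_eigsDesc_univ_val hB).symm)

lemma eigsDesc_mul_conjTranspose_self_comm (N : Matrix (Fin d) (Fin d) ℂ) :
    eigsDesc (N * Nᴴ) = eigsDesc (Nᴴ * N) :=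
  eigsDesc_congr (isHermitian_mul_conjTranspose_self N) (isHermitian_conjTranspose_mul_self N)
    (charpoly_mul_comm N Nᴴ)

lemma det_eq_prod_eigsDesc (hA : A.IsHermitian) : A.det = ((∏ i, eigsDesc A i : ℝ) : ℂ) := by
  rw [hA.det_eq_prod_eigenvalues, eigsDesc_eq_sortDesc_eigenvalues hA, prod_sortDesc]
  exact (Complex.ofReal_prod _ _).symm

lemma isHermitian_diagonal_ofReal {n : Type*} [DecidableEq n] (x : n → ℝ) :
    (diagonal fun i => (x i : ℂ)).IsHermitian :=
  isHermitian_diagonal_of_self_adjoint _ (funext fun i => Complex.conj_ofReal (x i))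

lemma roots_charpoly_diagonal {R n : Type*} [CommRing R] [IsDomain R] [Fintype n] [DecidableEq n]
    (x : n → R) : (diagonal x).charpoly.roots = univ.val.map x := by
  rw [charpoly_diagonal, ← Polynomial.roots_multiset_prod_X_sub_C (univ.val.map x),
    Multiset.map_map]
  rfl

lemma eigsDesc_diagonal (x : Fin d → ℝ) :
    eigsDesc (diagonal fun i => (x i : ℂ)) = sortDesc x := by
  refine eq_of_antitone_of_map_univ_val_eq (antitone_eigsDesc _) (antitone_sortDesc x)
    (Multiset.map_injective Complex.ofReal_injective ?_)
  rw [map_sortDesc_univ_val, Multiset.map_map, Multiset.map_map]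
  exact (map_eigsDesc_univ_val (isHermitian_diagonal_ofReal x)).trans (roots_charpoly_diagonal _)

lemma eigsDesc_unitary_conj {U : Matrix (Fin d) (Fin d) ℂ} (hU : U ∈ unitaryGroup (Fin d) ℂ)
    (hA : A.IsHermitian) : eigsDesc (U * A * Uᴴ) = eigsDesc A := by
  refine eigsDesc_congr (isHermitian_mul_mul_conjTranspose U hA) hA ?_
  rw [charpoly_mul_comm, ← Matrix.mul_assoc, ← star_eq_conjTranspose, mem_unitaryGroup_iff'.1 hU,
    Matrix.one_mul]

lemma eigsDesc_unitary_mul_diagonal_mul {U : Matrix (Fin d) (Fin d) ℂ}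
    (hU : U ∈ unitaryGroup (Fin d) ℂ) {x : Fin d → ℝ} (hx : Antitone x) :
    eigsDesc (U * (diagonal fun i => (x i : ℂ)) * Uᴴ) = x := by
  rw [eigsDesc_unitary_conj hU (isHermitian_diagonal_ofReal x), eigsDesc_diagonal,
    sortDesc_of_antitone hx]

lemma eigsDesc_cfc (hA : A.IsHermitian) (f : ℝ → ℝ) :
    eigsDesc (cfc f A) = sortDesc (f ∘ eigsDesc A) := by
  rw [← eigsDesc_diagonal]
  refine eigsDesc_congr (cfc_predicate f A) (isHermitian_diagonal_ofReal _) ?_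
  rw [hA.charpoly_cfc_eq, charpoly_diagonal, eigsDesc_eq_sortDesc_eigenvalues hA]
  exact (Equiv.prod_comp (Fin.revPerm.trans (Tuple.sort hA.eigenvalues))
    fun i => Polynomial.X - Polynomial.C ((f (hA.eigenvalues i) : ℝ) : ℂ)).symm

lemma eigsDesc_nonneg (hA : A.PosSemidef) (i : Fin d) : 0 ≤ eigsDesc A i := by
  rw [eigsDesc_eq_sortDesc_eigenvalues hA.isHermitian]
  exact hA.eigenvalues_nonneg _

lemma eigsDesc_pos (hA : A.PosDef) (i : Fin d) : 0 < eigsDesc A i := by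
  rw [eigsDesc_eq_sortDesc_eigenvalues hA.isHermitian]
  exact hA.eigenvalues_pos _

lemma eigsDesc_smul (hA : A.IsHermitian) {c : ℝ} (hc : 0 ≤ c) :
    eigsDesc (c • A) = c • eigsDesc A := by
  rw [← cfc_const_mul_id c A hA.isSelfAdjoint, eigsDesc_cfc hA]
  exact sortDesc_of_antitone fun i j h => mul_le_mul_of_nonneg_left (antitone_eigsDesc A h) hc

lemma eigsDesc_add_smul_one (hA : A.IsHermitian) (c : ℝ) (i : Fin d) :
    eigsDesc (A + c • 1) i = eigsDesc A i + c := by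
  have h : cfc (fun t => t + c) A = A + c • 1 := by
    rw [cfc_add_const c _ A (continuousOn_id' _) hA.isSelfAdjoint, cfc_id' ℝ A hA.isSelfAdjoint,
      Algebra.algebraMap_eq_smul_one]
  rw [← h, eigsDesc_cfc hA, sortDesc_of_antitone]
  · rfl
  · exact fun i j h => add_le_add_left (antitone_eigsDesc A h) c

lemma eigsDesc_inv (hA : A.PosDef) (i : Fin d) : eigsDesc A⁻¹ i = (eigsDesc A i.rev)⁻¹ := by
  have h : cfc (fun t : ℝ => t⁻¹) A = A⁻¹ := by
    obtain ⟨u, rfl⟩ := hA.isUnit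
    rw [cfc_inv_id u hA.isHermitian.isSelfAdjoint, coe_units_inv]
  rw [← h, eigsDesc_cfc hA.isHermitian, sortDesc_of_monotone]
  · rfl
  · exact fun i j h => inv_anti₀ (eigsDesc_pos hA j) (antitone_eigsDesc A h)

end Eigenvalues

section Weyl

open scoped MatrixOrder Matrix.Norms.L2Operator

variable {d : ℕ} {A B : Matrix (Fin d) (Fin d) ℂ}

lemma exists_unitary_eq_mul_diagonal_eigsDesc_mul (hA : A.IsHermitian) :
    ∃ U ∈ unitaryGroup (Fin d) ℂ, A = U * (diagonal fun i => (eigsDesc A i : ℂ)) * Uᴴ := by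
  let σ : Equiv.Perm (Fin d) := Fin.revPerm.trans (Tuple.sort hA.eigenvalues)
  let U : Matrix (Fin d) (Fin d) ℂ := hA.eigenvectorUnitary
  have hU : U * Uᴴ = 1 := mem_unitaryGroup_iff.1 hA.eigenvectorUnitary.2
  refine ⟨U.submatrix id σ, ?_, ?_⟩
  · rw [mem_unitaryGroup_iff, star_eq_conjTranspose, conjTranspose_submatrix,
      submatrix_mul_equiv, hU, submatrix_id_id]
  · have hdiag : (diagonal fun i => (eigsDesc A i : ℂ)) =
        (diagonal fun i => (hA.eigenvalues i : ℂ)).submatrix σ σ := by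
      rw [submatrix_diagonal_equiv, eigsDesc_eq_sortDesc_eigenvalues hA]
      rfl
    rw [hdiag, conjTranspose_submatrix, submatrix_mul_equiv, submatrix_mul_equiv, submatrix_id_id]
    exact hA.spectral_theorem

lemma star_dotProduct_mul_diagonal_mul_mulVec {n : Type*} [Fintype n] [DecidableEq n]
    (U : Matrix n n ℂ) (x : n → ℝ) (v : n → ℂ) :
    star v ⬝ᵥ (U * (diagonal fun i => (x i : ℂ)) * Uᴴ) *ᵥ v =
      ((∑ j, x j * Complex.normSq ((Uᴴ *ᵥ v) j) : ℝ) : ℂ) := by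
  rw [← mulVec_mulVec, ← mulVec_mulVec, dotProduct_mulVec, ← conjTranspose_conjTranspose U,
    ← star_mulVec, conjTranspose_conjTranspose]
  simp only [dotProduct, mulVec_diagonal, Pi.star_apply, Complex.ofReal_sum, Complex.ofReal_mul,
    Complex.normSq_eq_conj_mul_self, Complex.star_def, mul_left_comm]

lemma sum_normSq_conjTranspose_mulVec {n : Type*} [Fintype n] [DecidableEq n] {U : Matrix n n ℂ}
    (hU : U ∈ unitaryGroup n ℂ) (v : n → ℂ) :
    ∑ j, Complex.normSq ((Uᴴ *ᵥ v) j) = ∑ j, Complex.normSq (v j) := by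
  have h := star_dotProduct_mul_diagonal_mul_mulVec U 1 v
  have h1 := star_dotProduct_mul_diagonal_mul_mulVec 1 1 v
  have hU1 : U * Uᴴ = 1 := mem_unitaryGroup_iff.1 hU
  simp only [Pi.one_apply, Complex.ofReal_one, diagonal_one, mul_one, hU1, one_mul,
    conjTranspose_one, one_mulVec] at h h1
  exact_mod_cast h.symm.trans h1

lemma exists_ne_zero_forall_mulVec_apply_eq_zero {R n : Type*} [CommRing R] [IsDomain R]
    [Fintype n] [LinearOrder n] (M N : Matrix n n R) (i : n) :
    ∃ v ≠ 0, (∀ j, i < j → (M *ᵥ v) j = 0) ∧ ∀ j < i, (N *ᵥ v) j = 0 := by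
  let L : Matrix n n R := fun j => if i < j then M j else if j < i then N j else 0
  have hL : L.det = 0 := det_eq_zero_of_row_eq_zero i fun j => by simp [L]
  obtain ⟨v, hv, hLv⟩ := exists_mulVec_eq_zero_iff.2 hL
  refine ⟨v, hv, fun j hj => ?_, fun j hj => ?_⟩
  · simpa [L, mulVec, hj] using congrFun hLv j
  · simpa [L, mulVec, hj, hj.not_gt] using congrFun hLv j

/- Some vector is orthogonal both to the eigenvectors of `A` below the `i`-th and to those of `B`
above the `i`-th; comparing the two quadratic forms there compares the `i`-th eigenvalues. -/
lemma eigsDesc_mono (hA : A.IsHermitian) (hB : B.IsHermitian) (hAB : A ≤ B) :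
    eigsDesc A ≤ eigsDesc B := by
  intro i
  obtain ⟨U, hU, hAU⟩ := exists_unitary_eq_mul_diagonal_eigsDesc_mul hA
  obtain ⟨V, hV, hBV⟩ := exists_unitary_eq_mul_diagonal_eigsDesc_mul hB
  obtain ⟨v, hv, hUv, hVv⟩ := exists_ne_zero_forall_mulVec_apply_eq_zero Uᴴ Vᴴ i
  have hAv : eigsDesc A i * ∑ j, Complex.normSq (v j) ≤
      ∑ j, eigsDesc A j * Complex.normSq ((Uᴴ *ᵥ v) j) := by
    rw [← sum_normSq_conjTranspose_mulVec hU, Finset.mul_sum]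
    refine Finset.sum_le_sum fun j _ => ?_
    rcases lt_or_ge i j with h | h
    · simp [hUv j h]
    · exact mul_le_mul_of_nonneg_right (antitone_eigsDesc A h) (Complex.normSq_nonneg _)
  have hBv : ∑ j, eigsDesc B j * Complex.normSq ((Vᴴ *ᵥ v) j) ≤
      eigsDesc B i * ∑ j, Complex.normSq (v j) := by
    rw [← sum_normSq_conjTranspose_mulVec hV, Finset.mul_sum]
    refine Finset.sum_le_sum fun j _ => ?_
    rcases lt_or_ge j i with h | h
    · simp [hVv j h]
    · exact mul_le_mul_of_nonneg_right (antitone_eigsDesc B h) (Complex.normSq_nonneg _)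
  have hABv : ∑ j, eigsDesc A j * Complex.normSq ((Uᴴ *ᵥ v) j) ≤
      ∑ j, eigsDesc B j * Complex.normSq ((Vᴴ *ᵥ v) j) := by
    have h := (Matrix.le_iff.1 hAB).dotProduct_mulVec_nonneg v
    rw [sub_mulVec, dotProduct_sub, sub_nonneg] at h
    rw [← Complex.real_le_real, ← star_dotProduct_mul_diagonal_mul_mulVec,
      ← star_dotProduct_mul_diagonal_mul_mulVec, ← hAU, ← hBV]
    exact h
  have hpos : 0 < ∑ j, Complex.normSq (v j) := by
    obtain ⟨j, hj⟩ := Function.ne_iff.1 hv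
    exact Finset.sum_pos' (fun _ _ => Complex.normSq_nonneg _)
      ⟨j, mem_univ _, Complex.normSq_pos.2 hj⟩
  exact le_of_mul_le_mul_right (hAv.trans (hABv.trans hBv)) hpos

lemma eigsDesc_le_add_norm_sub (hA : A.IsHermitian) (hB : B.IsHermitian) (i : Fin d) :
    eigsDesc A i ≤ eigsDesc B i + ‖A - B‖ := by
  have h : A ≤ B + ‖A - B‖ • 1 := by
    rw [← sub_le_iff_le_add', ← Algebra.algebraMap_eq_smul_one]
    exact (hA.sub hB).isSelfAdjoint.le_algebraMap_norm_self
  rw [← eigsDesc_add_smul_one hB]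
  exact eigsDesc_mono hA (hB.add (isHermitian_one.smul (IsSelfAdjoint.all _))) h i

lemma lipschitzOnWith_eigsDesc :
    LipschitzOnWith 1 eigsDesc {A : Matrix (Fin d) (Fin d) ℂ | A.IsHermitian} := by
  refine LipschitzOnWith.mk_one fun A hA B hB => (dist_pi_le_iff dist_nonneg).2 fun i => ?_
  have hAB := eigsDesc_le_add_norm_sub hA hB i
  have hBA := eigsDesc_le_add_norm_sub hB hA i
  rw [← dist_eq_norm] at hAB hBA
  rw [dist_comm] at hBA
  exact abs_sub_le_iff.2 ⟨by linarith, by linarith⟩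

lemma tendsto_eigsDesc {ι : Type*} {l : Filter ι} [l.NeBot] {F : ι → Matrix (Fin d) (Fin d) ℂ}
    {C : Matrix (Fin d) (Fin d) ℂ} (hF : Tendsto F l (𝓝 C)) (hherm : ∀ᶠ i in l, (F i).IsHermitian) :
    Tendsto (fun i => eigsDesc (F i)) l (𝓝 (eigsDesc C)) := by
  have hC : C.IsHermitian := (isClosed_eq continuous_star continuous_id).mem_of_tendsto hF hherm
  exact (lipschitzOnWith_eigsDesc.continuousOn C hC).tendsto.comp
    (tendsto_nhdsWithin_iff.2 ⟨hF, hherm⟩)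

lemma continuous_sortDesc : Continuous (sortDesc (d := d)) := by
  have h : Continuous fun x : Fin d → ℝ => diagonal fun i => (x i : ℂ) := by fun_prop
  exact (lipschitzOnWith_eigsDesc.continuousOn.comp_continuous h isHermitian_diagonal_ofReal).congr
    eigsDesc_diagonal

lemma IsLogMaj.of_tendsto {ι : Type*} {l : Filter ι} [l.NeBot] {x y : ι → Fin d → ℝ}
    {x₀ y₀ : Fin d → ℝ} (hx : Tendsto x l (𝓝 x₀)) (hy : Tendsto y l (𝓝 y₀))
    (h : ∀ᶠ i in l, IsLogMaj (x i) (y i)) : IsLogMaj x₀ y₀ := by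
  have hprod {z : ι → Fin d → ℝ} {z₀ : Fin d → ℝ} (hz : Tendsto z l (𝓝 z₀))
      (s : Finset (Fin d)) : Tendsto (fun i => ∏ j ∈ s, z i j) l (𝓝 (∏ j ∈ s, z₀ j)) :=
    tendsto_finsetProd s fun j _ => (tendsto_pi_nhds.1 hz) j
  refine ⟨fun k => ?_, ?_⟩
  · exact le_of_tendsto_of_tendsto
      (hprod ((continuous_sortDesc.tendsto x₀).comp hx) (Iic k))
      (hprod ((continuous_sortDesc.tendsto y₀).comp hy) (Iic k)) (h.mono fun i hi => hi.1 k)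
  · exact tendsto_nhds_unique_of_eventuallyEq (hprod hx univ) (hprod hy univ)
      (h.mono fun i hi => hi.2)

end Weyl

section Lidskii

open scoped MatrixOrder Matrix.Norms.L2Operator

variable {d : ℕ} {X P : Matrix (Fin d) (Fin d) ℂ}

lemma prod_max_eq_prod_Iic_mul_pow {ι M : Type*} [Fintype ι] [LinearOrder ι]
    [LocallyFiniteOrderBot ι] [CommMonoid M] [LinearOrder M] {p : ι → M} (hp : Antitone p) (k : ι) :
    ∏ i, max (p i) (p k) = (∏ i ∈ Iic k, p i) * p k ^ #(Iic k)ᶜ := by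
  rw [← Finset.prod_mul_prod_compl (Iic k)]
  congr 1
  · exact Finset.prod_congr rfl fun i hi => max_eq_left (hp (Finset.mem_Iic.1 hi))
  · refine Finset.prod_eq_pow_card fun i hi => max_eq_right (hp ?_)
    rw [Finset.mem_compl, Finset.mem_Iic, not_le] at hi
    exact hi.le

lemma prod_le_prod_mul_prod_Iic {ι R : Type*} [Fintype ι] [LinearOrder ι]
    [LocallyFiniteOrderBot ι] [CommRing R] [LinearOrder R] [IsStrictOrderedRing R]
    {a p x y : ι → R} {k : ι} {s : Finset ι}
    (hs : #s = #(Iic k)) (hp : Antitone p) (hpk : 0 < p k) (ha : ∀ i, 0 < a i)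
    (hx : 0 ≤ x) (hxy : x ≤ y) (hay : p k • a ≤ y)
    (hy : ∏ i, y i = (∏ i, a i) * ∏ i, max (p i) (p k)) :
    ∏ i ∈ s, x i ≤ (∏ i ∈ s, a i) * ∏ i ∈ Iic k, p i := by
  have hpos : 0 < ∏ i ∈ sᶜ, p k * a i := Finset.prod_pos fun i _ => mul_pos hpk (ha i)
  have hsc : #(Iic k)ᶜ = #sᶜ := by rw [Finset.card_compl, Finset.card_compl, hs]
  refine le_of_mul_le_mul_right ?_ hpos
  calc (∏ i ∈ s, x i) * ∏ i ∈ sᶜ, p k * a i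
      ≤ (∏ i ∈ s, y i) * ∏ i ∈ sᶜ, y i := by
        refine mul_le_mul (Finset.prod_le_prod (fun i _ => hx i) fun i _ => hxy i)
          (Finset.prod_le_prod (fun i _ => (mul_pos hpk (ha i)).le) fun i _ => hay i) hpos.le
          (Finset.prod_nonneg fun i _ => (hx i).trans (hxy i))
    _ = (∏ i, a i) * ((∏ i ∈ Iic k, p i) * p k ^ #sᶜ) := by
        rw [Finset.prod_mul_prod_compl, hy, prod_max_eq_prod_Iic_mul_pow hp, hsc]
    _ = ((∏ i ∈ s, a i) * ∏ i ∈ Iic k, p i) * ∏ i ∈ sᶜ, p k * a i := by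
        rw [← Finset.prod_mul_prod_compl s a, Finset.prod_mul_distrib, Finset.prod_const]
        ring

lemma prod_eigsDesc_mul_mul_conjTranspose (X : Matrix (Fin d) (Fin d) ℂ) (hP : P.IsHermitian) :
    ∏ i, eigsDesc (X * P * Xᴴ) i = (∏ i, eigsDesc (X * Xᴴ) i) * ∏ i, eigsDesc P i := by
  have h : (X * P * Xᴴ).det = (X * Xᴴ).det * P.det := by
    rw [det_mul_right_comm, det_mul]
  rw [det_eq_prod_eigsDesc (isHermitian_mul_mul_conjTranspose X hP), det_eq_prod_eigsDesc hP,
    det_eq_prod_eigsDesc (isHermitian_mul_conjTranspose_self X)] at h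
  exact_mod_cast h

/- Raising the eigenvalues of `P` below the `k`-th to `λ_k(P)` gives a matrix `Q` with `P ≤ Q` and
`λ_k(P) ≤ Q`, so `X Q Xᴴ` dominates both `X P Xᴴ` and `λ_k(P) X Xᴴ`; the determinant of `X Q Xᴴ`
is known (Li and Mathias). -/
theorem prod_eigsDesc_mul_mul_conjTranspose_le (hX : IsUnit X) (hP : P.PosDef) {k : Fin d}
    {s : Finset (Fin d)} (hs : #s = #(Iic k)) :
    ∏ i ∈ s, eigsDesc (X * P * Xᴴ) i ≤
      (∏ i ∈ s, eigsDesc (X * Xᴴ) i) * ∏ i ∈ Iic k, eigsDesc P i := by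
  set t := eigsDesc P k
  let Q := cfc (fun x => max x t) P
  have hQ : Q.IsHermitian := cfc_predicate _ P
  have hPQ : P ≤ Q := by
    conv_lhs => rw [← cfc_id' ℝ P hP.isHermitian.isSelfAdjoint]
    exact cfc_mono fun x _ => le_max_left x t
  have htQ : t • 1 ≤ Q := by
    rw [← Algebra.algebraMap_eq_smul_one]
    exact algebraMap_le_cfc _ t P fun x _ => le_max_right x t
  have hXPX : (X * P * Xᴴ).PosSemidef := hP.posSemidef.mul_mul_conjTranspose_same X
  have hXX : (X * Xᴴ).PosDef :=
    PosDef.mul_conjTranspose_self X (vecMul_injective_of_isUnit hX)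
  refine prod_le_prod_mul_prod_Iic hs (antitone_eigsDesc P) (eigsDesc_pos hP k)
    (eigsDesc_pos hXX) (eigsDesc_nonneg hXPX)
    (eigsDesc_mono hXPX.isHermitian (isHermitian_mul_mul_conjTranspose X hQ)
      (star_right_conjugate_le_conjugate hPQ X)) ?_ ?_
  · rw [← eigsDesc_smul hXX.isHermitian (eigsDesc_pos hP k).le]
    refine eigsDesc_mono (hXX.isHermitian.smul (IsSelfAdjoint.all _))
      (isHermitian_mul_mul_conjTranspose X hQ) ?_
    have h := star_right_conjugate_le_conjugate htQ X
    rwa [mul_smul_comm, smul_mul_assoc, mul_one] at h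
  · rw [prod_eigsDesc_mul_mul_conjTranspose X hQ, eigsDesc_cfc hP.isHermitian, prod_sortDesc]
    rfl

/- Write `P = Rᴴ R` and `N = R Xᴴ`. Then `X P Xᴴ = Nᴴ N`, and the upper bound applied to
`R⁻¹ (N Nᴴ) R⁻¹ᴴ = Xᴴ X` gives the claim after division by the eigenvalues of `P⁻¹`. -/
theorem prod_mul_rev_le_prod_eigsDesc_mul_mul_conjTranspose (hX : IsUnit X) (hP : P.PosDef)
    {k : Fin d} {s : Finset (Fin d)} (hs : #s = #(Iic k)) :
    ∏ i ∈ s, eigsDesc (X * Xᴴ) i * eigsDesc P i.rev ≤ ∏ i ∈ Iic k, eigsDesc (X * P * Xᴴ) i := by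
  obtain ⟨R, hR, hPR : P = Rᴴ * R⟩ :=
    CStarAlgebra.isStrictlyPositive_iff_eq_star_mul_self.1 hP.isStrictlyPositive
  let N := R * Xᴴ
  have hN : (N * Nᴴ).PosDef :=
    PosDef.mul_conjTranspose_self N (vecMul_injective_of_isUnit (hR.mul hX.star))
  have hXNX : Nᴴ * N = X * P * Xᴴ := by
    simp [N, hPR, Matrix.mul_assoc]
  have hRNR : R⁻¹ * (N * Nᴴ) * R⁻¹ᴴ = Xᴴ * X := by
    have hRN : R⁻¹ * N = Xᴴ := nonsing_inv_mul_cancel_left R Xᴴ ((isUnit_iff_isUnit_det R).1 hR)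
    rw [← Matrix.mul_assoc, Matrix.mul_assoc, ← conjTranspose_mul, hRN, conjTranspose_conjTranspose]
  have hRR : R⁻¹ * R⁻¹ᴴ = P⁻¹ := by
    rw [hPR, Matrix.mul_inv_rev, conjTranspose_nonsing_inv]
  have h := prod_eigsDesc_mul_mul_conjTranspose_le (isUnit_nonsing_inv_iff.2 hR) hN hs
  rw [hRNR, hRR, ← eigsDesc_mul_conjTranspose_self_comm, eigsDesc_mul_conjTranspose_self_comm N,
    hXNX] at h
  rw [Finset.prod_mul_distrib, ← le_div_iff₀ (Finset.prod_pos fun i _ => eigsDesc_pos hP i.rev),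
    div_eq_inv_mul, ← Finset.prod_inv_distrib]
  simpa only [eigsDesc_inv hP] using h

theorem isLogMaj_eigsDesc_mul_mul_conjTranspose (hX : IsUnit X) (hP : P.PosDef) :
    IsLogMaj (eigsDesc (X * P * Xᴴ)) (fun i => eigsDesc (X * Xᴴ) i * eigsDesc P i) := by
  refine ⟨fun k => ?_, ?_⟩
  · rw [sortDesc_of_antitone (antitone_eigsDesc _), sortDesc_of_antitone, Finset.prod_mul_distrib]
    · exact prod_eigsDesc_mul_mul_conjTranspose_le hX hP rfl
    · exact fun i j h => mul_le_mul (antitone_eigsDesc _ h) (antitone_eigsDesc _ h)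
        (eigsDesc_nonneg hP.posSemidef j) (eigsDesc_nonneg (posSemidef_self_mul_conjTranspose X) i)
  · rw [prod_eigsDesc_mul_mul_conjTranspose X hP.isHermitian, Finset.prod_mul_distrib]

theorem isLogMaj_mul_rev_eigsDesc_mul_mul_conjTranspose (hX : IsUnit X) (hP : P.PosDef) :
    IsLogMaj (fun i => eigsDesc (X * Xᴴ) i * eigsDesc P i.rev) (eigsDesc (X * P * Xᴴ)) := by
  refine .of_forall_card_eq (antitone_eigsDesc _)
    (fun k s hs => prod_mul_rev_le_prod_eigsDesc_mul_mul_conjTranspose hX hP hs) ?_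
  rw [prod_eigsDesc_mul_mul_conjTranspose X hP.isHermitian, Finset.prod_mul_distrib]
  exact congrArg _ (Equiv.prod_comp Fin.revPerm (eigsDesc P))

end Lidskii

section CStarAlgebra

variable {𝔄 : Type*} [CStarAlgebra 𝔄] [PartialOrder 𝔄] [StarOrderedRing 𝔄]

/-- The geometric mean `a # b = a^{1/2} (a^{-1/2} b a^{-1/2})^{1/2} a^{1/2}` of a strictly positive
element `a` and a nonnegative element `b` of a C⋆-algebra. -/
noncomputable def cstarGeoMean (a b : 𝔄) : 𝔄 :=
  a ^ (1 / 2 : ℝ) * (a ^ (-(1 / 2) : ℝ) * b * a ^ (-(1 / 2) : ℝ)) ^ (1 / 2 : ℝ) * a ^ (1 / 2 : ℝ)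

variable {a a' b b' : 𝔄}

lemma cstarGeoMean_nonneg (a b : 𝔄) : 0 ≤ cstarGeoMean a b :=
  CFC.rpow_nonneg.isSelfAdjoint.conjugate_nonneg CFC.rpow_nonneg

lemma rpow_half_mul_rpow_half (ha : 0 ≤ a) : a ^ (1 / 2 : ℝ) * a ^ (1 / 2 : ℝ) = a := by
  rw [← CFC.sqrt_eq_rpow, CFC.sqrt_mul_sqrt_self a]

lemma exists_star_mul_self_eq_and_cstarGeoMean_eq (ha : IsStrictlyPositive a) (hb : 0 ≤ b) :
    ∃ z : 𝔄, star z * z = b ∧ cstarGeoMean a b = a ^ (1 / 2 : ℝ) * z := by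
  set r := a ^ (1 / 2 : ℝ)
  set s := a ^ (-(1 / 2) : ℝ)
  set k := (s * b * s) ^ (1 / 2 : ℝ)
  have hsbs : 0 ≤ s * b * s := CFC.rpow_nonneg.isSelfAdjoint.conjugate_nonneg hb
  have hrs : r * s = 1 := CFC.rpow_mul_rpow_neg (1 / 2)
  have hsr : s * r = 1 := CFC.rpow_neg_mul_rpow (1 / 2)
  refine ⟨k * r, ?_, mul_assoc r k r⟩
  calc star (k * r) * (k * r) = r * (k * k) * r := by
        rw [star_mul, CFC.rpow_nonneg.isSelfAdjoint.star_eq, CFC.rpow_nonneg.isSelfAdjoint.star_eq]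
        noncomm_ring
    _ = (r * s) * b * (s * r) := by
        rw [rpow_half_mul_rpow_half hsbs]
        noncomm_ring
    _ = b := by rw [hrs, hsr, one_mul, mul_one]

lemma cstarGeoMean_mul_rpow_neg_one_mul_cstarGeoMean (ha : IsStrictlyPositive a) (hb : 0 ≤ b) :
    cstarGeoMean a b * a ^ (-1 : ℝ) * cstarGeoMean a b = b := by
  obtain ⟨z, hz, hG⟩ := exists_star_mul_self_eq_and_cstarGeoMean_eq ha hb
  have hr : IsSelfAdjoint (a ^ (1 / 2 : ℝ)) := CFC.rpow_nonneg.isSelfAdjoint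
  have hGstar : cstarGeoMean a b = star z * a ^ (1 / 2 : ℝ) := by
    rw [← (cstarGeoMean_nonneg a b).isSelfAdjoint.star_eq, hG, star_mul, hr.star_eq]
  have hpow : a ^ (1 / 2 : ℝ) * a ^ (-1 : ℝ) * a ^ (1 / 2 : ℝ) = 1 := by
    rw [← CFC.rpow_add ha.isUnit, ← CFC.rpow_add ha.isUnit]
    norm_num [CFC.rpow_zero a ha.nonneg]
  calc cstarGeoMean a b * a ^ (-1 : ℝ) * cstarGeoMean a b
      = star z * (a ^ (1 / 2 : ℝ) * a ^ (-1 : ℝ) * a ^ (1 / 2 : ℝ)) * z := by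
        nth_rewrite 1 [hGstar]
        rw [hG]
        noncomm_ring
    _ = b := by rw [hpow, mul_one, hz]

lemma le_of_mul_self_le_mul_self {x y : 𝔄} (hx : 0 ≤ x) (hy : 0 ≤ y) (h : x * x ≤ y * y) :
    x ≤ y := by
  have := CFC.sqrt_le_sqrt _ _ h
  rwa [CFC.sqrt_mul_self x, CFC.sqrt_mul_self y] at this

/- With `c = a # b`, `c' = a' # b'` and `s = a'^{-1/2}`, the Riccati equation for both means gives
`(s c s)² = s (c a'⁻¹ c) s ≤ s (c a⁻¹ c) s = s b s ≤ s b' s = (s c' s)²`. -/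
theorem cstarGeoMean_mono (ha : IsStrictlyPositive a) (hb : 0 ≤ b) (haa : a ≤ a') (hbb : b ≤ b') :
    cstarGeoMean a b ≤ cstarGeoMean a' b' := by
  have ha' : IsStrictlyPositive a' := ha.of_le haa
  set c := cstarGeoMean a b
  set c' := cstarGeoMean a' b'
  set r := a' ^ (1 / 2 : ℝ)
  set s := a' ^ (-(1 / 2) : ℝ)
  have hc : IsSelfAdjoint c := (cstarGeoMean_nonneg a b).isSelfAdjoint
  have hr : IsSelfAdjoint r := CFC.rpow_nonneg.isSelfAdjoint
  have hs : IsSelfAdjoint s := CFC.rpow_nonneg.isSelfAdjoint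
  have hrs : r * s = 1 := CFC.rpow_mul_rpow_neg (1 / 2)
  have hsr : s * r = 1 := CFC.rpow_neg_mul_rpow (1 / 2)
  have hss : s * s = a' ^ (-1 : ℝ) := by
    rw [← CFC.rpow_add ha'.isUnit]
    norm_num
  have hsq (x : 𝔄) : (s * x * s) * (s * x * s) = s * (x * a' ^ (-1 : ℝ) * x) * s := by
    rw [← hss]
    noncomm_ring
  have hscs : s * c * s ≤ s * c' * s := by
    refine le_of_mul_self_le_mul_self (hs.conjugate_nonneg (cstarGeoMean_nonneg a b))
      (hs.conjugate_nonneg (cstarGeoMean_nonneg a' b')) ?_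
    calc (s * c * s) * (s * c * s) = s * (c * a' ^ (-1 : ℝ) * c) * s := hsq c
      _ ≤ s * (c * a ^ (-1 : ℝ) * c) * s := hs.conjugate_le_conjugate
          (hc.conjugate_le_conjugate (CStarAlgebra.rpow_neg_one_le_rpow_neg_one haa))
      _ = s * b * s := by rw [cstarGeoMean_mul_rpow_neg_one_mul_cstarGeoMean ha hb]
      _ ≤ s * b' * s := hs.conjugate_le_conjugate hbb
      _ = (s * c' * s) * (s * c' * s) := by
          rw [hsq, cstarGeoMean_mul_rpow_neg_one_mul_cstarGeoMean ha' (hb.trans hbb)]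
  have hconj (x : 𝔄) : r * (s * x * s) * r = x := by
    rw [show r * (s * x * s) * r = (r * s) * x * (s * r) by noncomm_ring, hrs, hsr, one_mul,
      mul_one]
  simpa only [hconj] using hr.conjugate_le_conjugate hscs

end CStarAlgebra

section MonotoneLimit

variable {α β : Type*} [LinearOrder α] [DenselyOrdered α] [NoMaxOrder α] [TopologicalSpace α]
  [OrderTopology α] [PartialOrder β] [TopologicalSpace β] [OrderClosedTopology β]

/- Any cluster point lies below every value of `f`, hence below any other cluster point. -/
lemma exists_tendsto_nhdsGT_of_monotoneOn {f : α → β} {x : α} {K : Set β}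
    (hf : MonotoneOn f (Set.Ioi x)) (hK : IsCompact K) (hfK : ∀ᶠ y in 𝓝[>] x, f y ∈ K) :
    ∃ c, Tendsto f (𝓝[>] x) (𝓝 c) := by
  have hle_apply {c : β} (hc : MapClusterPt c (𝓝[>] x) f) {y : α} (hy : x < y) : c ≤ f y :=
    isClosed_Iic.mem_of_mapClusterPt hc <| by
      filter_upwards [Ioc_mem_nhdsGT hy] with z hz using hf hz.1 hy hz.2
  have hle {c c' : β} (hc : MapClusterPt c (𝓝[>] x) f) (hc' : MapClusterPt c' (𝓝[>] x) f) :
      c ≤ c' :=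
    isClosed_Ici.mem_of_mapClusterPt hc' <| by
      filter_upwards [self_mem_nhdsWithin] with y hy using hle_apply hc hy
  obtain ⟨c, -, hc⟩ := hK.exists_mapClusterPt (tendsto_principal.2 hfK)
  exact ⟨c, hK.tendsto_nhds_of_unique_mapClusterPt hfK fun c' _ hc' =>
    (hle hc' hc).antisymm (hle hc hc')⟩

end MonotoneLimit

section GeometricMean

open scoped MatrixOrder Matrix.Norms.L2Operator

variable {d : ℕ} {A B : Matrix (Fin d) (Fin d) ℂ}

lemma psdPow_eq_rpow (hA : 0 ≤ A) (r : ℝ) : psdPow A r = A ^ r := by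
  have hA' : A.IsHermitian := hA.isSelfAdjoint
  rw [CFC.rpow_eq_cfc_real hA, hA'.cfc_eq, psdPow, dif_pos hA']
  rfl

lemma geoMeanPD_eq_cstarGeoMean (hA : 0 ≤ A) (hB : 0 ≤ B) :
    geoMeanPD A B = cstarGeoMean A B := by
  simp only [geoMeanPD, cstarGeoMean, psdPow_eq_rpow hA]
  rw [psdPow_eq_rpow (CFC.rpow_nonneg.isSelfAdjoint.conjugate_nonneg hB)]

lemma isLogMaj_eigsDesc_cstarGeoMean_sq (hA : A.PosDef) (hB : B.PosDef) :
    IsLogMaj (fun i => eigsDesc A i * eigsDesc B i.rev) (eigsDesc (cstarGeoMean A B ^ 2)) ∧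
      IsLogMaj (eigsDesc (cstarGeoMean A B ^ 2)) (fun i => eigsDesc A i * eigsDesc B i) := by
  obtain ⟨z, hz : zᴴ * z = B, hG⟩ := exists_star_mul_self_eq_and_cstarGeoMean_eq
    hA.isStrictlyPositive hB.posSemidef.nonneg
  set R := A ^ (1 / 2 : ℝ)
  have hRstar : Rᴴ = R := CFC.rpow_nonneg.isSelfAdjoint
  have hRR : R * Rᴴ = A := by rw [hRstar, rpow_half_mul_rpow_half hA.posSemidef.nonneg]
  have hR : IsUnit R := isUnit_of_mul_isUnit_left (hRR ▸ hA.isUnit)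
  have hzz : (z * zᴴ).PosDef := PosDef.mul_conjTranspose_self z
    (vecMul_injective_of_isUnit (isUnit_of_mul_isUnit_right (hz ▸ hB.isUnit)))
  have hGG : cstarGeoMean A B ^ 2 = R * (z * zᴴ) * Rᴴ := by
    have hGstar : (cstarGeoMean A B)ᴴ = cstarGeoMean A B :=
      (cstarGeoMean_nonneg A B).isSelfAdjoint
    calc cstarGeoMean A B ^ 2 = cstarGeoMean A B * (cstarGeoMean A B)ᴴ := by rw [hGstar, sq]
      _ = R * (z * zᴴ) * Rᴴ := by simp only [hG, conjTranspose_mul, Matrix.mul_assoc]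
  have hlower := isLogMaj_mul_rev_eigsDesc_mul_mul_conjTranspose hR hzz
  have hupper := isLogMaj_eigsDesc_mul_mul_conjTranspose hR hzz
  rw [eigsDesc_mul_conjTranspose_self_comm z, hz, hRR, ← hGG] at hlower hupper
  exact ⟨hlower, hupper⟩

lemma posDef_add_smul_one (hA : A.PosSemidef) {ε : ℝ} (hε : 0 < ε) :
    (A + (ε : ℂ) • 1).PosDef :=
  .posSemidef_add hA (PosDef.one.smul (Complex.zero_lt_real.2 hε))

lemma monotoneOn_cstarGeoMean_add_smul_one (hA : A.PosSemidef) (hB : B.PosSemidef) :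
    MonotoneOn (fun ε : ℝ => cstarGeoMean (A + (ε : ℂ) • 1) (B + (ε : ℂ) • 1)) (Set.Ioi 0) := by
  intro ε hε δ _ hεδ
  have hle (C : Matrix (Fin d) (Fin d) ℂ) : C + (ε : ℂ) • 1 ≤ C + (δ : ℂ) • 1 :=
    add_le_add_right (smul_le_smul_of_nonneg_right (Complex.real_le_real.2 hεδ) zero_le_one) C
  exact cstarGeoMean_mono (posDef_add_smul_one hA hε).isStrictlyPositive
    (posDef_add_smul_one hB hε).posSemidef.nonneg (hle A) (hle B)

lemma exists_tendsto_cstarGeoMean_add_smul_one (hA : A.PosSemidef) (hB : B.PosSemidef) :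
    ∃ G, Tendsto (fun ε : ℝ => cstarGeoMean (A + (ε : ℂ) • 1) (B + (ε : ℂ) • 1))
      (𝓝[>] 0) (𝓝 G) := by
  have hmono := monotoneOn_cstarGeoMean_add_smul_one hA hB
  have : ProperSpace (Matrix (Fin d) (Fin d) ℂ) := FiniteDimensional.proper ℂ _
  refine exists_tendsto_nhdsGT_of_monotoneOn hmono
    (isCompact_closedBall 0 ‖cstarGeoMean (A + ((1 : ℝ) : ℂ) • 1) (B + ((1 : ℝ) : ℂ) • 1)‖) ?_
  filter_upwards [Ioc_mem_nhdsGT zero_lt_one] with ε hε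
  rw [mem_closedBall_zero_iff]
  exact CStarAlgebra.norm_le_norm_of_nonneg_of_le (cstarGeoMean_nonneg _ _)
    (hmono hε.1 (Set.mem_Ioi.2 zero_lt_one) hε.2)

lemma tendsto_cstarGeoMean_geoMean (hA : A.PosSemidef) (hB : B.PosSemidef) :
    Tendsto (fun ε : ℝ => cstarGeoMean (A + (ε : ℂ) • 1) (B + (ε : ℂ) • 1))
      (𝓝[>] 0) (𝓝 (geoMean A B)) := by
  obtain ⟨G, hG⟩ := exists_tendsto_cstarGeoMean_add_smul_one hA hB
  have heq : (fun ε : ℝ => cstarGeoMean (A + (ε : ℂ) • 1) (B + (ε : ℂ) • 1)) =ᶠ[𝓝[>] 0]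
      fun ε : ℝ => geoMeanPD (A + (ε : ℂ) • 1) (B + (ε : ℂ) • 1) := by
    filter_upwards [self_mem_nhdsWithin] with ε hε
    exact (geoMeanPD_eq_cstarGeoMean (posDef_add_smul_one hA hε).posSemidef.nonneg
      (posDef_add_smul_one hB hε).posSemidef.nonneg).symm
  exact (tendsto_nhds_limUnder ⟨G, hG.congr' heq⟩).congr' heq.symm

lemma tendsto_add_smul_one (A : Matrix (Fin d) (Fin d) ℂ) :
    Tendsto (fun ε : ℝ => A + (ε : ℂ) • (1 : Matrix (Fin d) (Fin d) ℂ)) (𝓝[>] 0) (𝓝 A) := by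
  have h : Continuous fun ε : ℝ => A + (ε : ℂ) • (1 : Matrix (Fin d) (Fin d) ℂ) := by fun_prop
  simpa using (h.tendsto 0).mono_left nhdsWithin_le_nhds

theorem isLogMaj_eigsDesc_geoMean_sq (hA : A.PosSemidef) (hB : B.PosSemidef) :
    IsLogMaj (fun i => eigsDesc A i * eigsDesc B i.rev) (eigsDesc (geoMean A B ^ 2)) ∧
      IsLogMaj (eigsDesc (geoMean A B ^ 2)) (fun i => eigsDesc A i * eigsDesc B i) := by
  have hpos : ∀ᶠ ε : ℝ in 𝓝[>] 0, 0 < ε := eventually_mem_nhdsWithin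
  have hmaj := hpos.mono fun ε hε => isLogMaj_eigsDesc_cstarGeoMean_sq
    (posDef_add_smul_one hA hε) (posDef_add_smul_one hB hε)
  have hG := tendsto_eigsDesc ((tendsto_cstarGeoMean_geoMean hA hB).pow 2)
    (.of_forall fun ε => ((cstarGeoMean_nonneg _ _).isSelfAdjoint.pow 2))
  have hEA (i : Fin d) := tendsto_pi_nhds.1 (tendsto_eigsDesc (tendsto_add_smul_one A)
    (hpos.mono fun ε hε => (posDef_add_smul_one hA hε).isHermitian)) i
  have hEB (i : Fin d) := tendsto_pi_nhds.1 (tendsto_eigsDesc (tendsto_add_smul_one B)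
    (hpos.mono fun ε hε => (posDef_add_smul_one hB hε).isHermitian)) i
  exact ⟨.of_tendsto (tendsto_pi_nhds.2 fun i => (hEA i).mul (hEB i.rev)) hG
      (hmaj.mono fun _ h => h.1),
    .of_tendsto hG (tendsto_pi_nhds.2 fun i => (hEA i).mul (hEB i)) (hmaj.mono fun _ h => h.2)⟩

end GeometricMean

/-- Log-majorization for the eigenvalues of `G_1 = (A # B)^2`:
`(a_i b_{d+1-i}) ≺_(log) (λ_i(G_1)) ≺_(log) (a_i b_i)`. -/
theorem geometric_mean_squared_log_majorization
    {d : ℕ} (A B V W : Matrix (Fin d) (Fin d) ℂ) (a b : Fin d → ℝ)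
    (hA : A.PosSemidef) (hB : B.PosSemidef)
    (hV : V ∈ Matrix.unitaryGroup (Fin d) ℂ)
    (hW : W ∈ Matrix.unitaryGroup (Fin d) ℂ)
    (ha : Antitone a) (hb : Antitone b)
    (ha0 : ∀ i, 0 ≤ a i) (hb0 : ∀ i, 0 ≤ b i)
    (hAd : A = V * Matrix.diagonal (fun i => (a i : ℂ)) * Vᴴ)
    (hBd : B = W * Matrix.diagonal (fun i => (b i : ℂ)) * Wᴴ) :
    IsLogMaj (fun i => a i * b i.rev) (eigsDesc (geoMean A B ^ 2)) ∧
    IsLogMaj (eigsDesc (geoMean A B ^ 2)) (fun i => a i * b i) := by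
  have hEA : eigsDesc A = a := hAd ▸ eigsDesc_unitary_mul_diagonal_mul hV ha
  have hEB : eigsDesc B = b := hBd ▸ eigsDesc_unitary_mul_diagonal_mul hW hb
  simpa only [hEA, hEB] using isLogMaj_eigsDesc_geoMean_sq hA hB
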